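/- arXiv:2306.17482 — 6 statements merged into one kernel-verified Lean document; each statement's English description precedes it below -/
import Mathlib

section
/- (1-WL upper-bounds graph transformers with node positional encodings.) Let G be a finite simple graph on vertex set V with edge labeling ℓ, and let h⁰ : V → ℝ^{d₀} be initial node embeddings (node features together with positional encodings). Consider a network computing states h¹, …, h^L where each layer is either (a) a message-passing layer: h^i(v) = f_i(h^{i-1}(v), multiset of pairs (ℓ(v,w), h^{i-1}(w)) over neighbors w of v in G), for an arbitrary function f_i, or (b) a global self-attention layer: h^i(v) = g_i(h^{i-1}(v), Attn(H^{i-1})_v), where H^{i-1} is the matrix stacking the states h^{i-1} as rows, Attn is single-head softmax attention with arbitrary weight matrices, and g_i is an arbitrary function. Let m be the total number of message-passing layers among the L layers. Then for all vertices u, v: if u and v are 1-WLE-equivalent at round m on G with initial coloring h⁰, then h^L(u) = h^L(v). -/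
namespace GT

/-- Multiset of neighbors of `v` in `G`. -/
noncomputable def nbrs {V : Type} [Fintype V] (G : SimpleGraph V) (v : V) : Multiset V :=
  (@Finset.filter V (fun w => G.Adj v w) (fun _ => Classical.propDecidable _) Finset.univ).val

/-- Canonical iterated color types for 1-WL: `A₀ = α`, `A_{i+1} = A_i × Multiset A_i`. -/
def WLColor (α : Type) : ℕ → Type
  | 0 => α
  | i + 1 => WLColor α i × Multiset (WLColor α i)

/-- 1-WL color refinement: `c_{i+1}(v) = (c_i(v), multiset of c_i(w) over neighbors w of v)`. -/
noncomputable def WL {V α : Type} [Fintype V] (G : SimpleGraph V) (c0 : V → α) :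
    (i : ℕ) → V → WLColor α i
  | 0 => c0
  | i + 1 => fun v => (WL G c0 i v, (nbrs G v).map (WL G c0 i))

/-- Canonical iterated color types for 1-WLE: `A₀ = α`, `A_{i+1} = A_i × Multiset (β × A_i)`. -/
def WLEColor (α β : Type) : ℕ → Type
  | 0 => α
  | i + 1 => WLEColor α β i × Multiset (β × WLEColor α β i)

/-- Edge-feature-aware 1-WL (1-WLE):
`c_{i+1}(v) = (c_i(v), multiset of pairs (ℓ(v,w), c_i(w)) over neighbors w of v)`. -/
noncomputable def WLE {V α β : Type} [Fintype V] (G : SimpleGraph V) (ℓ : Sym2 V → β)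
    (c0 : V → α) : (i : ℕ) → V → WLEColor α β i
  | 0 => c0
  | i + 1 => fun v => (WLE G ℓ c0 i v, (nbrs G v).map fun w => (ℓ s(v, w), WLE G ℓ c0 i w))

open Matrix

/-- Row-wise softmax: `(softmax x)_j = exp (x j) / ∑ k, exp (x k)`. -/
noncomputable def softmaxRow {ι : Type} [Fintype ι] (x : ι → ℝ) : ι → ℝ :=
  fun j => Real.exp (x j) / ∑ k, Real.exp (x k)

/-- Single-head softmax attention:
`Attn(C) = softmax (C Wᵠ (C Wᵏ)ᵀ / √d') * (C Wᵛ)`, with softmax applied row-wise. -/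
noncomputable def attn {V : Type} [Fintype V] {d d' : ℕ}
    (C : Matrix V (Fin d) ℝ) (WQ WK WV : Matrix (Fin d) (Fin d') ℝ) :
    Matrix V (Fin d') ℝ :=
  (Matrix.of fun u => softmaxRow fun w =>
    ((C * WQ) * (C * WK)ᵀ) u w / Real.sqrt (d' : ℝ)) * (C * WV)

/-!
Say that a state map `y` is coarser than `x` if `x u = x v` implies `y u = y v`. One round of color
refinement preserves this relation, because a factorization of `y` through `x` can be applied inside
the multisets of messages. A self-attention layer only coarsens, because the row of the attention
matrix at `v` depends on `v` only through the query computed from its state: keys, values and the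
softmax normalization range over all vertices. So only message-passing layers consume a round.
-/

section ColorRefinement

variable {V : Type} {β X Y : Type*} [Fintype V] {G : SimpleGraph V} {ℓ : Sym2 V → β}
  {x : V → X} {y : V → Y}

/-- One round of edge-labeled color refinement of an arbitrary coloring `x`: the color of `v` paired
with the multiset of labeled colors of its neighbors. It is both the recursion step of `WLE` and
the input available to a message-passing layer at `v`. -/
noncomputable def refineStep (G : SimpleGraph V) (ℓ : Sym2 V → β) (x : V → X) (v : V) :
    X × Multiset (β × X) :=
  (x v, (nbrs G v).map fun w => (ℓ s(v, w), x w))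

theorem WLE_succ {α β : Type} (G : SimpleGraph V) (ℓ : Sym2 V → β) (c₀ : V → α) (i : ℕ) :
    WLE G ℓ c₀ (i + 1) = refineStep G ℓ (WLE G ℓ c₀ i) :=
  rfl

theorem refineStep_comp (G : SimpleGraph V) (ℓ : Sym2 V → β) (φ : X → Y) (x : V → X) :
    refineStep G ℓ (φ ∘ x) = Prod.map φ (Multiset.map (Prod.map id φ)) ∘ refineStep G ℓ x := by
  funext v
  simp [refineStep]

theorem factorsThrough_refineStep_refineStep (hyx : y.FactorsThrough x) :
    (refineStep G ℓ y).FactorsThrough (refineStep G ℓ x) := by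
  intro u v huv
  have : Nonempty Y := ⟨y u⟩
  obtain ⟨φ, rfl⟩ := (Function.factorsThrough_iff y).mp hyx
  rw [refineStep_comp]
  exact Function.FactorsThrough.rfl.comp_left _ huv

theorem factorsThrough_refineStep_of_messagePassing
    (hy : ∃ f : X → Multiset (β × X) → Y,
      ∀ v, y v = f (x v) ((nbrs G v).map fun w => (ℓ s(v, w), x w))) :
    y.FactorsThrough (refineStep G ℓ x) := by
  obtain ⟨f, hf⟩ := hy
  have hy_comp : y = Function.uncurry f ∘ refineStep G ℓ x := funext hf
  exact hy_comp ▸ Function.FactorsThrough.rfl.comp_left _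

end ColorRefinement

section Attention

theorem mul_row_eq_of_row_eq {m n p R : Type*} [Fintype n] [NonUnitalNonAssocSemiring R]
    {A : Matrix m n R} {i j : m} (hij : A i = A j) (B : Matrix n p R) :
    (A * B) i = (A * B) j := by
  rw [mul_apply_eq_vecMul, mul_apply_eq_vecMul, hij]

variable {V : Type} [Fintype V] {d : ℕ}

theorem attn_row_eq_of_row_eq {d' : ℕ} {C : Matrix V (Fin d) ℝ} {u v : V} (huv : C u = C v)
    (WQ WK WV : Matrix (Fin d) (Fin d') ℝ) :
    attn C WQ WK WV u = attn C WQ WK WV v := by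
  have hscores : (C * WQ * (C * WK)ᵀ) u = (C * WQ * (C * WK)ᵀ) v :=
    mul_row_eq_of_row_eq (mul_row_eq_of_row_eq huv WQ) _
  exact mul_row_eq_of_row_eq
    (congrArg (fun s : V → ℝ => softmaxRow fun w => s w / √(d' : ℝ)) hscores) (C * WV)

theorem factorsThrough_of_attention {Y : Type*} {x : V → Fin d → ℝ} {y : V → Y}
    (hy : ∃ (d' : ℕ) (WQ WK WV : Matrix (Fin d) (Fin d') ℝ) (g : (Fin d → ℝ) → (Fin d' → ℝ) → Y),
      ∀ v, y v = g (x v) (attn (Matrix.of x) WQ WK WV v)) :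
    y.FactorsThrough x := by
  obtain ⟨d', WQ, WK, WV, g, hg⟩ := hy
  intro u v huv
  rw [hg u, hg v, huv, attn_row_eq_of_row_eq (C := Matrix.of x) huv]

end Attention

theorem wle_bounds_graph_transformer_general {V β : Type} [Fintype V] (G : SimpleGraph V)
    (ℓ : Sym2 V → β) (L : ℕ) {X : ℕ → Type} (h : (i : ℕ) → V → X i)
    (isMP : ℕ → Prop) [DecidablePred isMP]
    (hMP : ∀ i < L, isMP i → (h (i + 1)).FactorsThrough (refineStep G ℓ (h i)))
    (hglobal : ∀ i < L, ¬ isMP i → (h (i + 1)).FactorsThrough (h i)) :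
    (h L).FactorsThrough (WLE G ℓ (h 0) (Nat.count isMP L)) := by
  induction L with
  | zero => exact Function.FactorsThrough.rfl
  | succ L ih =>
    have hprev : (h L).FactorsThrough (WLE G ℓ (h 0) (Nat.count isMP L)) :=
      ih (fun i hi => hMP i (hi.trans L.lt_succ_self))
        (fun i hi => hglobal i (hi.trans L.lt_succ_self))
    intro u v huv
    by_cases hL : isMP L
    · rw [Nat.count_succ, if_pos hL, WLE_succ] at huv
      exact hMP L L.lt_succ_self hL (factorsThrough_refineStep_refineStep hprev huv)
    · rw [Nat.count_succ, if_neg hL] at huv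
      exact hglobal L L.lt_succ_self hL (hprev huv)

/-- 1-WLE upper-bounds networks interleaving message-passing layers and global self-attention
layers (graph transformers with node positional encodings): if `u` and `v` are
1-WLE-equivalent at round `m`, where `m` is the number of message-passing layers, then the
final states of `u` and `v` agree. -/
theorem wle_bounds_graph_transformer {V β : Type} [Fintype V] (G : SimpleGraph V)
    (ℓ : Sym2 V → β) (L : ℕ) (dims : ℕ → ℕ) (h : (i : ℕ) → V → Fin (dims i) → ℝ)
    (isMP : ℕ → Bool)
    (hlayer : ∀ i < L,
      if isMP i then
        -- message-passing layer
        ∃ f : (Fin (dims i) → ℝ) → Multiset (β × (Fin (dims i) → ℝ)) → Fin (dims (i + 1)) → ℝ,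
          ∀ v : V, h (i + 1) v = f (h i v) ((nbrs G v).map fun w => (ℓ s(v, w), h i w))
      else
        -- global self-attention layer
        ∃ (d' : ℕ) (WQ WK WV : Matrix (Fin (dims i)) (Fin d') ℝ)
          (g : (Fin (dims i) → ℝ) → (Fin d' → ℝ) → Fin (dims (i + 1)) → ℝ),
          ∀ v : V, h (i + 1) v = g (h i v) (attn (Matrix.of (h i)) WQ WK WV v))
    (u v : V)
    (heq : WLE G ℓ (h 0) (((Finset.range L).filter fun i => isMP i = true).card) u =
           WLE G ℓ (h 0) (((Finset.range L).filter fun i => isMP i = true).card) v) :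
    h L u = h L v := by
  rw [← Nat.count_eq_card_filter_range] at heq
  exact wle_bounds_graph_transformer_general G ℓ L h (isMP · = true)
    (fun i hi hMP => factorsThrough_refineStep_of_messagePassing ((if_pos hMP).mp (hlayer i hi)))
    (fun i hi hattn => factorsThrough_of_attention ((if_neg hattn).mp (hlayer i hi))) heq

end GT
end

section
/- (Message-passing GNNs with edge features are at most as powerful as 1-WLE.) Let G be a finite simple graph on vertex set V with node coloring c₀ : V → α and edge labeling ℓ with values in β. Let a message-passing network with edge features compute h⁰ = c₀ and h^i(v) = f_i(h^{i-1}(v), multiset of pairs (ℓ(v,w), h^{i-1}(w)) over neighbors w of v), where the f_i are arbitrary functions. Then for every i and all vertices u, v: if u and v are 1-WLE-equivalent at round i, then h^i(u) = h^i(v). -/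
namespace GT

section MessagePassing

variable {V W α β : Type} [Fintype V] [Fintype W] {S : ℕ → Type*}

/-- `IsMPNN G ℓ c₀ enc f h` says that `h` is the run on the graph `G`, with edge labels `ℓ` and
node colors `c₀`, of the message-passing network with update functions `f`. Initial states are
obtained from the colors by an encoder `enc`, and the update producing round `i + 1` is `f i`. -/
structure IsMPNN (G : SimpleGraph V) (ℓ : Sym2 V → β) (c₀ : V → α) (enc : α → S 0)
    (f : (i : ℕ) → S i × Multiset (β × S i) → S (i + 1)) (h : (i : ℕ) → V → S i) : Prop where
  zero (v : V) : h 0 v = enc (c₀ v)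
  succ (i : ℕ) (v : V) : h (i + 1) v = f i (h i v, (nbrs G v).map fun w => (ℓ s(v, w), h i w))

/-- The network state encoded by a 1-WLE color: the network with encoder `enc` and update
functions `f` evaluated on the color itself, without reference to a graph. -/
def WLEColor.decode (enc : α → S 0) (f : (i : ℕ) → S i × Multiset (β × S i) → S (i + 1)) :
    (i : ℕ) → WLEColor α β i → S i
  | 0 => enc
  | i + 1 => fun (c, m) => f i (decode enc f i c, m.map (Prod.map id (decode enc f i)))

variable {G : SimpleGraph V} {H : SimpleGraph W} {ℓ : Sym2 V → β} {ℓ' : Sym2 W → β}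
  {c₀ : V → α} {c₀' : W → α} {enc : α → S 0}
  {f : (i : ℕ) → S i × Multiset (β × S i) → S (i + 1)}
  {h : (i : ℕ) → V → S i} {h' : (i : ℕ) → W → S i}

theorem IsMPNN.decode_WLE (hh : IsMPNN G ℓ c₀ enc f h) (i : ℕ) (v : V) :
    WLEColor.decode enc f i (WLE G ℓ c₀ i v) = h i v := by
  induction i generalizing v with
  | zero => exact (hh.zero v).symm
  | succ i ih =>
    simp only [WLE, WLEColor.decode, Multiset.map_map, Function.comp_def, Prod.map_apply, id_eq,
      ih, hh.succ]

theorem mpnn_le_wle_general (hh : IsMPNN G ℓ c₀ enc f h) (hh' : IsMPNN H ℓ' c₀' enc f h')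
    {i : ℕ} {u : V} {v : W} (huv : WLE G ℓ c₀ i u = WLE H ℓ' c₀' i v) : h i u = h' i v := by
  rw [← hh.decode_WLE, huv, hh'.decode_WLE]

end MessagePassing

/-- Message-passing GNNs with edge features are at most as powerful as 1-WLE: if `u` and `v`
are 1-WLE-equivalent at round `i`, then `h^i(u) = h^i(v)`. -/
theorem mpnn_le_wle {V β : Type} [Fintype V] (G : SimpleGraph V) (ℓ : Sym2 V → β)
    (S : ℕ → Type) (h : (i : ℕ) → V → S i)
    (f : (i : ℕ) → S i × Multiset (β × S i) → S (i + 1))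
    (hf : ∀ (i : ℕ) (v : V),
      h (i + 1) v = f i (h i v, (nbrs G v).map fun w => (ℓ s(v, w), h i w))) :
    ∀ (i : ℕ) (u v : V), WLE G ℓ (h 0) i u = WLE G ℓ (h 0) i v → h i u = h i v := by
  have isMPNN : IsMPNN G ℓ (h 0) id f h := ⟨fun _ => rfl, hf⟩
  exact fun _ _ _ => mpnn_le_wle_general isMPNN isMPNN

end GT
end

section
/- (GIN with edge features and injective aggregation is exactly as powerful as 1-WLE.) Let G be a finite simple graph on vertex set V with node coloring c₀ : V → α and edge labeling ℓ with values in β. Suppose a message-passing network with edge features computes h⁰ = c₀ and h^i(v) = f_i(h^{i-1}(v), multiset of pairs (ℓ(v,w), h^{i-1}(w)) over neighbors w of v), where each f_i is an injective function of the pair (previous state, multiset of (edge label, neighbor state) pairs). Then for every round i and all vertices u, v: h^i(u) = h^i(v) if and only if u and v are 1-WLE-equivalent at round i. -/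
namespace GT

/-!
If the updates of one message-passing network are injective, its states at round `i + 1` determine
both its states at round `i` and the multisets of messages at round `i`; inductively, its states
determine those of every other network on the same graph whose initial states they determine.
1-WLE is itself a network with injective updates, namely the identity maps, so this applies in both
directions.
-/

universe u v w x

section FactorsThrough

variable {ι : Type u} {β : Type v} {γ : Type w} {δ : Type x} {p : ι → γ} {q : ι → δ}

theorem factorsThrough_multiset_map (hqp : q.FactorsThrough p) :
    (Multiset.map q).FactorsThrough (Multiset.map p) := by
  intro s t hst
  rw [← Multiset.rel_eq, Multiset.rel_map] at hst ⊢
  exact hst.mono fun a _ b _ hab => hqp hab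

theorem factorsThrough_prodMap_id (hqp : q.FactorsThrough p) :
    (Prod.map (id : β → β) q).FactorsThrough (Prod.map id p) := by
  rintro ⟨b, a⟩ ⟨b', a'⟩ hab
  obtain ⟨hb, ha⟩ := Prod.mk.inj hab
  exact Prod.ext hb (hqp ha)

end FactorsThrough

section MessagePassing

variable {V : Type u} {β : Type v} {S : ℕ → Type w} {T : ℕ → Type x}

/-- The states `h` are computed by the message-passing network with update functions `f` on the
edge-labelled directed multigraph in which `E v` is the multiset of pairs (label, target) of the
edges leaving `v`. The update `f i` leads from round `i` to round `i + 1`. -/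
def IsMessagePassing (E : V → Multiset (β × V))
    (f : (i : ℕ) → S i × Multiset (β × S i) → S (i + 1)) (h : (i : ℕ) → V → S i) : Prop :=
  ∀ i v, h (i + 1) v = f i (h i v, (E v).map (Prod.map id (h i)))

variable {E : V → Multiset (β × V)}
  {f : (i : ℕ) → S i × Multiset (β × S i) → S (i + 1)} {h : (i : ℕ) → V → S i}
  {g : (i : ℕ) → T i × Multiset (β × T i) → T (i + 1)} {k : (i : ℕ) → V → T i}

theorem IsMessagePassing.factorsThrough (hh : IsMessagePassing E f h)
    (hk : IsMessagePassing E g k) (hf : ∀ i, Function.Injective (f i))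
    (h₀ : (k 0).FactorsThrough (h 0)) (i : ℕ) : (k i).FactorsThrough (h i) := by
  induction i with
  | zero => exact h₀
  | succ i ih =>
    intro u v huv
    rw [hh, hh] at huv
    obtain ⟨state_eq, messages_eq⟩ := Prod.mk.inj (hf i huv)
    have messages_eq' : (E u).map (Prod.map id (k i)) = (E v).map (Prod.map id (k i)) :=
      factorsThrough_multiset_map (factorsThrough_prodMap_id ih) messages_eq
    rw [hk, hk, ih state_eq, messages_eq']

theorem gin_injective_iff_wle_general (hh : IsMessagePassing E f h)
    (hk : IsMessagePassing E g k) (hf : ∀ i, Function.Injective (f i))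
    (hg : ∀ i, Function.Injective (g i)) (h₀ : ∀ u v, h 0 u = h 0 v ↔ k 0 u = k 0 v)
    (i : ℕ) (u v : V) : h i u = h i v ↔ k i u = k i v :=
  ⟨fun huv => hh.factorsThrough hk hf (fun a b => (h₀ a b).1) i huv,
    fun huv => hk.factorsThrough hh hg (fun a b => (h₀ a b).2) i huv⟩

end MessagePassing

section SimpleGraph

variable {V α β : Type} [Fintype V] (G : SimpleGraph V) (ℓ : Sym2 V → β)

/-- The edges at `v` in an edge-labelled simple graph, as pairs (label, other endpoint). -/
noncomputable def labelledNbrs (v : V) : Multiset (β × V) :=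
  (nbrs G v).map fun w => (ℓ s(v, w), w)

theorem isMessagePassing_labelledNbrs_iff {S : ℕ → Type u}
    {f : (i : ℕ) → S i × Multiset (β × S i) → S (i + 1)} {h : (i : ℕ) → V → S i} :
    IsMessagePassing (labelledNbrs G ℓ) f h ↔
      ∀ i v, h (i + 1) v = f i (h i v, (nbrs G v).map fun w => (ℓ s(v, w), h i w)) := by
  simp only [IsMessagePassing, labelledNbrs, Multiset.map_map, Function.comp_def, Prod.map_apply,
    id_eq]

theorem isMessagePassing_WLE (c0 : V → α) :
    IsMessagePassing (S := WLEColor α β) (labelledNbrs G ℓ) (fun _ => id) (WLE G ℓ c0) :=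
  (isMessagePassing_labelledNbrs_iff G ℓ).2 fun _ _ => rfl

end SimpleGraph

/-- GIN with edge features and injective aggregation is exactly as powerful as 1-WLE:
with each `f_i` injective on pairs (previous state, multiset of (edge label, neighbor state)),
`h^i(u) = h^i(v)` iff `u` and `v` are 1-WLE-equivalent at round `i`. -/
theorem gin_injective_iff_wle {V β : Type} [Fintype V] (G : SimpleGraph V) (ℓ : Sym2 V → β)
    (S : ℕ → Type) (h : (i : ℕ) → V → S i)
    (f : (i : ℕ) → S i × Multiset (β × S i) → S (i + 1))
    (hinj : ∀ i : ℕ, Function.Injective (f i))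
    (hf : ∀ (i : ℕ) (v : V),
      h (i + 1) v = f i (h i v, (nbrs G v).map fun w => (ℓ s(v, w), h i w))) :
    ∀ (i : ℕ) (u v : V), h i u = h i v ↔ WLE G ℓ (h 0) i u = WLE G ℓ (h 0) i v := by
  exact gin_injective_iff_wle_general ((isMessagePassing_labelledNbrs_iff G ℓ).2 hf)
    (isMessagePassing_WLE G ℓ (h 0)) hinj (fun _ => Function.injective_id) fun _ _ => Iff.rfl

end GT
end

section
/- (Equivalence of 1-WLE on G with 1-WL on the incidence graph T(G).) Let G be a finite simple graph with node coloring c₀ and edge labeling ℓ, and let T(G) be its incidence graph with the induced initial coloring. Then for every k ≥ 0 and all original vertices u, v of G: u and v are 1-WLE-equivalent at round k in G if and only if u and v (viewed as vertices of T(G)) are 1-WL-equivalent at round 2k in T(G). In particular, 1-WLE on G induces the same partition of the original vertices as 1-WL on T(G). -/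
namespace GT

/-- The incidence graph `T(G)`: vertices are `V ⊕ G.edgeSet`, and each edge-vertex `e`
is adjacent exactly to its two endpoints; there are no other edges. -/
def incidenceGraph {V : Type} (G : SimpleGraph V) : SimpleGraph (V ⊕ G.edgeSet) where
  Adj x y :=
    match x, y with
    | Sum.inl v, Sum.inr e => v ∈ (e : Sym2 V)
    | Sum.inr e, Sum.inl v => v ∈ (e : Sym2 V)
    | _, _ => False
  symm := ⟨by rintro (v | e) (w | f) h <;> exact h⟩
  loopless := ⟨by rintro (v | e) h <;> exact h⟩

noncomputable instance edgeSetFintype {V : Type} [Fintype V] (G : SimpleGraph V) :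
    Fintype G.edgeSet :=
  Set.Finite.fintype (Set.toFinite _)

/-- The induced initial coloring of `T(G)`: an original vertex `v` gets color `inl (c0 v)`,
an edge-vertex `e` gets color `inr (ℓ e)`. -/
def incInit {V α β : Type} (G : SimpleGraph V) (c0 : V → α) (ℓ : Sym2 V → β) :
    V ⊕ G.edgeSet → α ⊕ β :=
  Sum.elim (fun v => Sum.inl (c0 v)) (fun e => Sum.inr (ℓ (e : Sym2 V)))

/-!
The round-`2k` color of an original vertex in `T(G)` is an injective recoding of its round-`k`
1-WLE color, and the recoding does not depend on the graph. Indeed, the color of an edge-vertex is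
determined by its label and the colors of its two endpoints. Conversely, at a vertex `v` of known
color, the color of an incident edge-vertex reveals the label and, by cancelling the color of `v`
from the multiset of endpoint colors, the color of the other endpoint one round earlier.
Passing through the edge-vertices thus costs two rounds of 1-WL for every round of 1-WLE.
-/

section EdgeColor

variable {γ : Type}

/-- The round-`i` color of a degree-two vertex with initial color `b`, as a function of the
round-`i` colors `x` and `y` of its neighbors. A color contains all earlier colors of its vertex as
iterated first components, so `x.1` and `y.1` are the colors of the neighbors one round earlier. -/
def edgeColor : (i : ℕ) → γ → WLColor γ i → WLColor γ i → WLColor γ i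
  | 0, b, _, _ => b
  | i + 1, b, x, y => (edgeColor i b x.1 y.1, {x.1, y.1})

/-- The round-`(i + 1)` color of a degree-two vertex with initial color `b`, as a function of the
round-`i` colors of its neighbors. -/
def edgeColorSucc (i : ℕ) (b : γ) (x y : WLColor γ i) : WLColor γ (i + 1) :=
  (edgeColor i b x y, {x, y})

theorem initial_eq_of_edgeColor_eq {i : ℕ} {b b' : γ} {x y x' y' : WLColor γ i}
    (h : edgeColor i b x y = edgeColor i b' x' y') : b = b' := by
  induction i with
  | zero => exact h
  | succ i ih => exact ih (congrArg Prod.fst h)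

theorem edgeColorSucc_right_inj {i : ℕ} {b b' : γ} {x y y' : WLColor γ i} :
    edgeColorSucc i b x y = edgeColorSucc i b' x y' ↔ b = b' ∧ y = y' := by
  refine ⟨fun h => ?_, fun ⟨hb, hy⟩ => by rw [hb, hy]⟩
  have endpoints : ({x, y} : Multiset (WLColor γ i)) = {x, y'} := congrArg Prod.snd h
  exact ⟨initial_eq_of_edgeColor_eq (congrArg Prod.fst h),
    Multiset.singleton_inj.1 ((Multiset.cons_inj_right x).1 endpoints)⟩

end EdgeColor

section IncidenceGraph

variable {V γ : Type} [Fintype V] {G : SimpleGraph V}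

theorem mem_nbrs {v w : V} : w ∈ nbrs G v ↔ G.Adj v w := by
  simp [nbrs]

theorem nodup_nbrs (G : SimpleGraph V) (v : V) : (nbrs G v).Nodup :=
  Finset.nodup _

theorem nbrs_incidenceGraph_inr {u w : V} (h : G.Adj u w) :
    nbrs (incidenceGraph G) (Sum.inr ⟨s(u, w), h⟩) = {Sum.inl u, Sum.inl w} := by
  refine (Multiset.Nodup.ext (nodup_nbrs _ _) (by simp [h.ne])).2 ?_
  rintro (x | e) <;> simp [mem_nbrs, incidenceGraph]

theorem map_nbrs_incidenceGraph_inl {v : V} {φ : V ⊕ G.edgeSet → γ} {f : V → γ}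
    (hf : ∀ w (h : G.Adj v w), φ (Sum.inr ⟨s(v, w), h⟩) = f w) :
    (nbrs (incidenceGraph G) (Sum.inl v)).map φ = (nbrs G v).map f := by
  symm
  refine Multiset.map_eq_map_of_bij_of_nodup _ _ (nodup_nbrs _ _) (nodup_nbrs _ _)
    (fun w hw => Sum.inr ⟨s(v, w), mem_nbrs.1 hw⟩) ?maps_to ?injective ?surjective
    fun w hw => (hf w (mem_nbrs.1 hw)).symm
  case maps_to => exact fun w _ => mem_nbrs.2 (Sym2.mem_mk_left v w)
  case injective =>
    exact fun _ _ _ _ h => Sym2.congr_right.1 (congrArg Subtype.val (Sum.inr_injective h))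
  case surjective =>
    rintro (x | ⟨e, he⟩) hadj
    · exact (mem_nbrs.1 hadj).elim
    · obtain ⟨w, rfl⟩ : v ∈ e := mem_nbrs.1 hadj
      exact ⟨w, mem_nbrs.2 he, rfl⟩

theorem WL_incidenceGraph_inr (c : V ⊕ G.edgeSet → γ) (i : ℕ) {u w : V} (h : G.Adj u w) :
    WL (incidenceGraph G) c i (Sum.inr ⟨s(u, w), h⟩) =
      edgeColor i (c (Sum.inr ⟨s(u, w), h⟩))
        (WL (incidenceGraph G) c i (Sum.inl u)) (WL (incidenceGraph G) c i (Sum.inl w)) := by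
  induction i with
  | zero => rfl
  | succ i ih =>
    refine Prod.ext ih ?_
    simp only [WL, edgeColor, nbrs_incidenceGraph_inr h, Multiset.insert_eq_cons,
      Multiset.map_cons, Multiset.map_singleton]

theorem WL_succ_incidenceGraph_inr (c : V ⊕ G.edgeSet → γ) (i : ℕ) {u w : V} (h : G.Adj u w) :
    WL (incidenceGraph G) c (i + 1) (Sum.inr ⟨s(u, w), h⟩) =
      edgeColorSucc i (c (Sum.inr ⟨s(u, w), h⟩))
        (WL (incidenceGraph G) c i (Sum.inl u)) (WL (incidenceGraph G) c i (Sum.inl w)) :=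
  WL_incidenceGraph_inr c (i + 1) h

end IncidenceGraph

section Recoding

variable {V α β : Type}

/-- The recoding of round-`k` 1-WLE colors on a graph as round-`2k` 1-WL colors on its incidence
graph. The two multisets are the colors of the incident edge-vertices at rounds `2k` and
`2k + 1`. -/
def WLEColor.toIncidence : (k : ℕ) → WLEColor α β k → WLColor (α ⊕ β) (2 * k)
  | 0, a => (Sum.inl a : α ⊕ β)
  | k + 1, (a, m) =>
    ((toIncidence k a,
      m.map fun p => edgeColor (2 * k) (Sum.inr p.1) (toIncidence k a) (toIncidence k p.2)),
      m.map fun p => edgeColorSucc (2 * k) (Sum.inr p.1) (toIncidence k a) (toIncidence k p.2))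

theorem WLEColor.toIncidence_injective (k : ℕ) :
    Function.Injective (toIncidence (α := α) (β := β) k) := by
  induction k with
  | zero => exact Sum.inl_injective
  | succ k ih =>
    rintro ⟨a, m⟩ ⟨a', m'⟩ h
    obtain rfl : a = a' := ih (congrArg (fun x => x.1.1) h)
    have edge_injective : Function.Injective fun p : β × WLEColor α β k =>
        edgeColorSucc (2 * k) (Sum.inr p.1) (toIncidence k a) (toIncidence k p.2) := by
      intro p q hpq
      obtain ⟨label_eq, color_eq⟩ := edgeColorSucc_right_inj.1 hpq
      exact Prod.ext (Sum.inr_injective label_eq) (ih color_eq)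
    exact Prod.ext rfl (Multiset.map_injective edge_injective (congrArg Prod.snd h))

theorem WL_incidenceGraph_two_mul_inl [Fintype V] (G : SimpleGraph V) (c0 : V → α)
    (ℓ : Sym2 V → β) (k : ℕ) (v : V) :
    WL (incidenceGraph G) (incInit G c0 ℓ) (2 * k) (Sum.inl v) =
      (WLE G ℓ c0 k v).toIncidence k := by
  induction k generalizing v with
  | zero => rfl
  | succ k ih =>
    have edge_two_mul (w : V) (h : G.Adj v w) :
        WL (incidenceGraph G) (incInit G c0 ℓ) (2 * k) (Sum.inr ⟨s(v, w), h⟩) =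
          edgeColor (2 * k) (Sum.inr (ℓ s(v, w))) ((WLE G ℓ c0 k v).toIncidence k)
            ((WLE G ℓ c0 k w).toIncidence k) := by
      rw [WL_incidenceGraph_inr, ih v, ih w]
      rfl
    have edge_two_mul_succ (w : V) (h : G.Adj v w) :
        WL (incidenceGraph G) (incInit G c0 ℓ) (2 * k + 1) (Sum.inr ⟨s(v, w), h⟩) =
          edgeColorSucc (2 * k) (Sum.inr (ℓ s(v, w))) ((WLE G ℓ c0 k v).toIncidence k)
            ((WLE G ℓ c0 k w).toIncidence k) := by
      rw [WL_succ_incidenceGraph_inr, ih v, ih w]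
      rfl
    simp only [WLE, WLEColor.toIncidence, Multiset.map_map]
    exact Prod.ext (Prod.ext (ih v) (map_nbrs_incidenceGraph_inl edge_two_mul))
      (map_nbrs_incidenceGraph_inl edge_two_mul_succ)

end Recoding

/-- 1-WLE on `G` is equivalent to 1-WL on the incidence graph `T(G)`: original vertices are
1-WLE-equivalent at round `k` in `G` iff they are 1-WL-equivalent at round `2k` in `T(G)`. -/
theorem wle_iff_wl_incidenceGraph {V α β : Type} [Fintype V] (G : SimpleGraph V)
    (c0 : V → α) (ℓ : Sym2 V → β) (k : ℕ) (u v : V) :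
    WLE G ℓ c0 k u = WLE G ℓ c0 k v ↔
      WL (incidenceGraph G) (incInit G c0 ℓ) (2 * k) (Sum.inl u) =
        WL (incidenceGraph G) (incInit G c0 ℓ) (2 * k) (Sum.inl v) := by
  rw [WL_incidenceGraph_two_mul_inl, WL_incidenceGraph_two_mul_inl,
    (WLEColor.toIncidence_injective k).eq_iff]

end GT
end

section
/- (Edge-feature reduction is strictly weaker than 1-WLE.) There exists a finite simple graph G with an edge labeling ℓ (taking values in {0,1,2,3}), a constant node coloring, and two vertices u, v of G, such that: (i) for every round i, u and v are 1-WL-equivalent at round i when 1-WL is run on G with initial node coloring assigning to each vertex x the multiset of labels ℓ(x,w) of its incident edges; but (ii) u and v are not 1-WLE-equivalent at round 2 when 1-WLE is run on G with the constant node coloring and edge labeling ℓ. A witness exists on 10 vertices. -/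
namespace GT

/-!
Two vertices with the same neighborhood and the same initial color are never separated by 1-WL,
however the labels are matched to the neighbors: the reduction keeps only the multiset of incident
labels. After two rounds, 1-WLE knows which label leads to a neighbor of which degree. So it is
enough to let two twins see their common neighbors, of different degrees, through swapped labels.
-/

section General

variable {V α β : Type} [Fintype V] (G : SimpleGraph V)

theorem nbrs_eq_neighborFinset_val [DecidableRel G.Adj] (v : V) :
    nbrs G v = (G.neighborFinset v).val := by
  rw [nbrs, SimpleGraph.neighborFinset_eq_filter]
  congr

theorem card_nbrs [DecidableRel G.Adj] (v : V) : (nbrs G v).card = G.degree v := by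
  rw [nbrs_eq_neighborFinset_val, Finset.card_val, SimpleGraph.card_neighborFinset_eq_degree]

variable {G}

theorem WL_eq_of_nbrs_eq {c0 : V → α} {u v : V} (hcolor : c0 u = c0 v)
    (hnbrs : nbrs G u = nbrs G v) (i : ℕ) : WL G c0 i u = WL G c0 i v := by
  induction i with
  | zero => exact hcolor
  | succ i ih => exact Prod.ext ih (congrArg (Multiset.map (WL G c0 i)) hnbrs)

theorem map_label_degree_eq_of_WLE_eq [DecidableRel G.Adj] {ℓ : Sym2 V → β} {c0 : V → α} {u v : V}
    {i : ℕ} (h : WLE G ℓ c0 (i + 2) u = WLE G ℓ c0 (i + 2) v) :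
    (nbrs G u).map (fun w => (ℓ s(u, w), G.degree w)) =
      (nbrs G v).map (fun w => (ℓ s(v, w), G.degree w)) := by
  -- A color of positive round records the degree as the size of its multiset component.
  let labelsAndDegrees (c : WLEColor α β (i + 2)) : Multiset (β × ℕ) :=
    c.2.map fun p => (p.1, p.2.2.card)
  have labelsAndDegrees_WLE (x : V) : labelsAndDegrees (WLE G ℓ c0 (i + 2) x) =
      (nbrs G x).map fun w => (ℓ s(x, w), G.degree w) := by
    simp only [labelsAndDegrees, WLE, Multiset.map_map, Function.comp_def, Multiset.card_map,
      card_nbrs]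
  rw [← labelsAndDegrees_WLE u, ← labelsAndDegrees_WLE v, h]

end General

section Witness

/-- The separating graph: the 4-cycle `0 - 2 - 1 - 3 - 0`, in which `0` and `1` are twins, with the
remaining vertices `4, …, 9` attached as leaves to `2`, so that `2` and `3` differ in degree. -/
def twinGraph : SimpleGraph (Fin 10) :=
  SimpleGraph.fromRel fun x y => (x < 2 ∧ (y = 2 ∨ y = 3)) ∨ (x = 2 ∧ 4 ≤ y)

instance : DecidableRel twinGraph.Adj :=
  inferInstanceAs (DecidableRel (SimpleGraph.fromRel _).Adj)

/-- The labeling of `twinGraph` in which each of the twins `0` and `1` has one incident edge labeled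
`0` and one labeled `1`, leading to `2` and `3` in opposite order. -/
def swapLabel (e : Sym2 (Fin 10)) : Fin 4 :=
  if e = s(0, 2) ∨ e = s(1, 3) then 0 else 1

theorem nbrs_twinGraph_zero : nbrs twinGraph 0 = {2, 3} := by
  rw [nbrs_eq_neighborFinset_val]
  decide

theorem nbrs_twinGraph_one : nbrs twinGraph 1 = {2, 3} := by
  rw [nbrs_eq_neighborFinset_val]
  decide

theorem map_swapLabel_zero_eq_one :
    (nbrs twinGraph 0).map (fun w => swapLabel s(0, w)) =
      (nbrs twinGraph 1).map (fun w => swapLabel s(1, w)) := by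
  rw [nbrs_twinGraph_zero, nbrs_twinGraph_one]
  decide

theorem map_swapLabel_degree_zero_ne_one :
    (nbrs twinGraph 0).map (fun w => (swapLabel s(0, w), twinGraph.degree w)) ≠
      (nbrs twinGraph 1).map (fun w => (swapLabel s(1, w), twinGraph.degree w)) := by
  rw [nbrs_twinGraph_zero, nbrs_twinGraph_one]
  decide

end Witness

/-- Edge-feature reduction is strictly weaker than 1-WLE: there is a graph on 10 vertices
with edge labels in `{0,1,2,3}`, a constant node coloring, and vertices `u`, `v` that plain
1-WL with the reduced coloring (each vertex colored by the multiset of its incident edge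
labels) never distinguishes, while 1-WLE distinguishes them at round 2. -/
theorem reduction_strictly_weaker_than_wle :
    ∃ (G : SimpleGraph (Fin 10)) (ℓ : Sym2 (Fin 10) → Fin 4) (u v : Fin 10),
      (∀ i : ℕ,
        WL G (fun x => (nbrs G x).map fun w => ℓ s(x, w)) i u =
          WL G (fun x => (nbrs G x).map fun w => ℓ s(x, w)) i v) ∧
      WLE G ℓ (fun _ => ()) 2 u ≠ WLE G ℓ (fun _ => ()) 2 v := by
  refine ⟨twinGraph, swapLabel, 0, 1, fun i => ?_, fun h => ?_⟩
  · exact WL_eq_of_nbrs_eq map_swapLabel_zero_eq_one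
      (nbrs_twinGraph_zero.trans nbrs_twinGraph_one.symm) i
  · exact map_swapLabel_degree_zero_ne_one (map_label_degree_eq_of_WLE_eq h)

end GT
end

section
/- Let G be a finite simple graph that is strongly regular with parameters (n, k, λ, μ) and assume 0 < μ. Then the betweenness centrality of every vertex w equals k(k−λ−1)/(2μ) as a rational number: bc(w) = k·(k−λ−1)/(2μ). In particular bc is the same for every vertex and is determined only by the parameters (n, k, λ, μ). -/
namespace GT

/-- `numSP G u v`: the number of shortest paths between `u` and `v`, i.e. the number of
walks from `u` to `v` of length `G.dist u v`. -/
noncomputable def numSP {V : Type} [Fintype V] [DecidableEq V] (G : SimpleGraph V)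
    [DecidableRel G.Adj] (u v : V) : ℕ :=
  (G.finsetWalkLength (G.dist u v) u v).card

/-- `numSPvia G w u v`: the number of shortest paths between `u` and `v` having `w` as an
internal vertex (`w` lies on the walk's support and `w ≠ u`, `w ≠ v`). -/
noncomputable def numSPvia {V : Type} [Fintype V] [DecidableEq V] (G : SimpleGraph V)
    [DecidableRel G.Adj] (w u v : V) : ℕ :=
  ((G.finsetWalkLength (G.dist u v) u v).filter fun p => w ∈ p.support ∧ w ≠ u ∧ w ≠ v).card

/-- Betweenness centrality
`bc(w) = (1/2) · Σ_{u ≠ v, u ≠ w, v ≠ w} σ_w(u,v)/σ(u,v)` (sum over ordered pairs). -/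
noncomputable def betweenness {V : Type} [Fintype V] [DecidableEq V] (G : SimpleGraph V)
    [DecidableRel G.Adj] (w : V) : ℚ :=
  (1 / 2) * ∑ u : V, ∑ v : V,
    if u ≠ v ∧ u ≠ w ∧ v ≠ w then (numSPvia G w u v : ℚ) / (numSP G u v : ℚ) else 0


/-!
As `μ > 0`, any two distinct vertices are at distance one or two. Adjacent pairs have no internal
vertices on their shortest path, and the shortest paths of a nonadjacent pair `u, v` correspond to
their `μ` common neighbors. So `w` collects `1 / μ` from each ordered pair of distinct nonadjacent
neighbors of `w`: there are `k` choices of `u`, and `v` must avoid `u` itself and the `λ` common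
neighbors of `u` and `w`.
-/

section Graph

open Finset SimpleGraph

variable {V : Type*} {G : SimpleGraph V} {u v w : V}

theorem dist_eq_two_iff :
    G.dist u v = 2 ↔ u ≠ v ∧ ¬G.Adj u v ∧ (G.commonNeighbors u v).Nonempty := by
  rw [← edist_eq_two_iff, SimpleGraph.dist, ENat.toNat_eq_iff two_ne_zero, Nat.cast_ofNat]

theorem ediam_le_two_iff :
    G.ediam ≤ 2 ↔ ∀ u v, Gᶜ.Adj u v → (G.commonNeighbors u v).Nonempty := by
  rw [ediam_le_iff]
  refine forall₂_congr fun u v => ?_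
  rw [← not_lt, two_lt_edist_iff, compl_adj, Set.nonempty_iff_ne_empty]
  tauto

theorem mem_support_iff_of_length_eq_two {p : G.Walk u v} (hp : p.length = 2) :
    w ∈ p.support ↔ w = u ∨ w = p.snd ∨ w = v := by
  match p, hp with
  | .cons _ (.cons _ .nil), _ => simp

theorem eq_or_eq_of_mem_support_of_length_le_one {p : G.Walk u v} (hp : p.length ≤ 1)
    (hw : w ∈ p.support) : w = u ∨ w = v := by
  match p, hp with
  | .nil, _ => simpa using hw
  | .cons _ .nil, _ => simpa using hw

theorem card_finsetWalkLength_two [DecidableEq V] [G.LocallyFinite]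
    [Fintype (G.commonNeighbors u v)] :
    #(G.finsetWalkLength 2 u v) = Fintype.card (G.commonNeighbors u v) := by
  rw [← card_set_walk_length_eq]
  exact Fintype.card_congr (G.walkLengthTwoEquivCommonNeighbors u v)

theorem card_filter_finsetWalkLength_two_snd_eq [DecidableEq V] [G.LocallyFinite]
    [Decidable (w ∈ G.commonNeighbors u v)] :
    #{p ∈ G.finsetWalkLength 2 u v | p.snd = w} =
      if w ∈ G.commonNeighbors u v then 1 else 0 := by
  let e := G.walkLengthTwoEquivCommonNeighbors u v
  split_ifs with hw
  · refine card_eq_one.2 ⟨e.symm ⟨w, hw⟩, ?_⟩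
    ext p
    simp only [mem_filter, mem_finsetWalkLength_iff, mem_singleton]
    constructor
    · rintro ⟨hp, hpw⟩
      have he : e ⟨p, hp⟩ = ⟨w, hw⟩ := Subtype.ext hpw
      rw [← he, e.symm_apply_apply]
    · rintro rfl
      exact ⟨(e.symm ⟨w, hw⟩).2, congrArg Subtype.val (e.apply_symm_apply ⟨w, hw⟩)⟩
  · refine card_eq_zero.2 (filter_eq_empty_iff.2 fun p hp hpw => hw ?_)
    exact hpw ▸ (e ⟨p, mem_finsetWalkLength_iff.1 hp⟩).2

theorem card_filter_compl_adj_add_card_commonNeighbors_add_one [Fintype V] [DecidableEq V]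
    [DecidableRel G.Adj] (h : G.Adj w u) :
    #{v ∈ G.neighborFinset w | Gᶜ.Adj u v} + Fintype.card (G.commonNeighbors w u) + 1 =
      G.degree w := by
  have hcommon : Fintype.card (G.commonNeighbors w u) = #{v ∈ G.neighborFinset w | G.Adj u v} := by
    rw [← Set.toFinset_card]
    congr 1
    ext v
    simp [mem_commonNeighbors]
  have hnonadj : {v ∈ G.neighborFinset w | ¬G.Adj u v} =
      insert u {v ∈ G.neighborFinset w | Gᶜ.Adj u v} := by
    ext v
    rcases eq_or_ne v u with rfl | hne
    · simp [h]
    · simp [hne, hne.symm]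
  rw [← G.card_neighborFinset_eq_degree w, hcommon,
    ← card_filter_add_card_filter_not (s := G.neighborFinset w) (G.Adj u), hnonadj,
    card_insert_of_notMem (by simp)]
  ring

end Graph

section Betweenness

open Finset SimpleGraph

variable {V : Type} [Fintype V] [DecidableEq V] {G : SimpleGraph V} [DecidableRel G.Adj]
  {u v w : V}

theorem numSP_of_dist_eq_two (h : G.dist u v = 2) :
    numSP G u v = Fintype.card (G.commonNeighbors u v) := by
  rw [numSP, h, card_finsetWalkLength_two]

theorem numSPvia_of_dist_eq_two (h : G.dist u v = 2) :
    numSPvia G w u v = if w ∈ G.commonNeighbors u v then 1 else 0 := by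
  rw [numSPvia, h, ← card_filter_finsetWalkLength_two_snd_eq]
  congr 1
  refine filter_congr fun p hp => ?_
  rw [mem_finsetWalkLength_iff] at hp
  rw [mem_support_iff_of_length_eq_two hp]
  have hsnd := (G.walkLengthTwoEquivCommonNeighbors u v ⟨p, hp⟩).2
  have hu : p.snd ≠ u := hsnd.1.ne'
  have hv : p.snd ≠ v := hsnd.2.ne'
  grind

theorem numSPvia_eq_zero_of_dist_le_one (h : G.dist u v ≤ 1) : numSPvia G w u v = 0 := by
  refine card_eq_zero.2 (filter_eq_empty_iff.2 ?_)
  rintro p hp ⟨hw, hwu, hwv⟩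
  have hlen : p.length ≤ 1 := (mem_finsetWalkLength_iff.1 hp).trans_le h
  exact (eq_or_eq_of_mem_support_of_length_le_one hlen hw).elim hwu hwv

theorem ne_of_numSPvia_ne_zero (h : numSPvia G w u v ≠ 0) : u ≠ v ∧ u ≠ w ∧ v ≠ w := by
  refine ⟨?_, ?_, ?_⟩ <;> rintro rfl
  · exact h (numSPvia_eq_zero_of_dist_le_one (by simp))
  · simp [numSPvia] at h
  · simp [numSPvia] at h

theorem betweenness_eq_half_sum_numSPvia_div_numSP :
    betweenness G w = 1 / 2 * ∑ u, ∑ v, (numSPvia G w u v : ℚ) / numSP G u v := by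
  unfold betweenness
  congr! 3 with u _ v _
  refine ite_eq_left_iff.2 fun hne => ?_
  have hvia : numSPvia G w u v = 0 := by_contra fun h => hne (ne_of_numSPvia_ne_zero h)
  rw [hvia, Nat.cast_zero, zero_div]

theorem numSPvia_div_numSP_of_ediam_le_two (hG : G.ediam ≤ 2) :
    (numSPvia G w u v : ℚ) / numSP G u v =
      if w ∈ G.commonNeighbors u v ∧ Gᶜ.Adj u v then
        1 / (Fintype.card (G.commonNeighbors u v) : ℚ) else 0 := by
  by_cases hadj : Gᶜ.Adj u v
  · have hdist : G.dist u v = 2 :=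
      dist_eq_two_iff.2 ⟨hadj.1, hadj.2, ediam_le_two_iff.1 hG u v hadj⟩
    rw [numSPvia_of_dist_eq_two hdist, numSP_of_dist_eq_two hdist]
    by_cases hw : w ∈ G.commonNeighbors u v <;> simp [hw, hadj]
  · have hdist : G.dist u v ≤ 1 := by
      rcases eq_or_ne u v with rfl | hne
      · simp
      · exact (dist_eq_one_iff_adj.2 (by simpa [hne] using hadj)).le
    simp [numSPvia_eq_zero_of_dist_le_one hdist, hadj]

theorem betweenness_of_ediam_le_two (hG : G.ediam ≤ 2) :
    betweenness G w = 1 / 2 * ∑ u ∈ G.neighborFinset w, ∑ v ∈ G.neighborFinset w with Gᶜ.Adj u v,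
      1 / (Fintype.card (G.commonNeighbors u v) : ℚ) := by
  simp only [betweenness_eq_half_sum_numSPvia_div_numSP, numSPvia_div_numSP_of_ediam_le_two hG,
    neighborFinset_eq_filter, sum_filter, mem_commonNeighbors, G.adj_comm _ w, ite_and,
    sum_ite_irrel, sum_const_zero]

theorem srg_betweenness_general {k l m : ℕ} (hdeg : G.degree w = k)
    (hadj : ∀ u, G.Adj w u → Fintype.card (G.commonNeighbors w u) = l)
    (hnonadj : ∀ u v, Gᶜ.Adj u v → Fintype.card (G.commonNeighbors u v) = m) (hm : 0 < m) :
    betweenness G w = (k : ℚ) * ((k : ℚ) - (l : ℚ) - 1) / (2 * (m : ℚ)) := by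
  have hdiam : G.ediam ≤ 2 := ediam_le_two_iff.2 fun u v h =>
    Set.nonempty_coe_sort.1 (Fintype.card_pos_iff.1 (hnonadj u v h ▸ hm))
  have hinner : ∀ u ∈ G.neighborFinset w,
      ∑ v ∈ G.neighborFinset w with Gᶜ.Adj u v, 1 / (Fintype.card (G.commonNeighbors u v) : ℚ) =
        ((k : ℚ) - l - 1) / m := by
    intro u hu
    rw [mem_neighborFinset] at hu
    have hcount := card_filter_compl_adj_add_card_commonNeighbors_add_one hu
    rw [hadj u hu, hdeg] at hcount
    calc
      _ = ∑ v ∈ G.neighborFinset w with Gᶜ.Adj u v, 1 / (m : ℚ) :=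
        sum_congr rfl fun v hv => by rw [hnonadj u v (mem_filter.1 hv).2]
      _ = ((k : ℚ) - l - 1) / m := by
        rw [sum_const, nsmul_eq_mul, ← hcount]
        push_cast
        ring
  rw [betweenness_of_ediam_le_two hdiam, sum_congr rfl hinner, sum_const,
    card_neighborFinset_eq_degree, hdeg, nsmul_eq_mul]
  ring

end Betweenness

/-- In a strongly regular graph with `0 < μ`, the betweenness centrality of every vertex
equals `k(k-λ-1)/(2μ)`. -/
theorem srg_betweenness {V : Type} [Fintype V] [DecidableEq V] (G : SimpleGraph V)
    [DecidableRel G.Adj] {n k l m : ℕ} (hG : G.IsSRGWith n k l m) (hm : 0 < m) :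
    ∀ w : V, betweenness G w = (k : ℚ) * ((k : ℚ) - (l : ℚ) - 1) / (2 * (m : ℚ)) := by
  exact fun w => srg_betweenness_general (hG.regular w) (hG.of_adj w)
    (fun _ _ h => hG.of_not_adj h.1 h.2) hm

end GT
end
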